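/- arXiv:2406.09962 — 2 statements merged into one kernel-verified Lean document; each statement's English description precedes it below -/
import Mathlib

section
/- Let N ≥ 1 and let S_N be the full permutation group of Fin N. Then the real dimension of S_N su(2^N), the real vector space of 2^N × 2^N complex matrices a that are skew-Hermitian, traceless, and satisfy U_α a U_α⁻¹ = a for all permutations α of Fin N, equals the binomial coefficient C(N+3, 3) − 1 (equivalently C(N+3, N) − 1). -/
open Matrix

/-- The permutation matrix on the index set `I → Fin 2` associated to a permutation `α` of
`I`, corresponding to the bijection `x ↦ x ∘ α`: its `(x, y)` entry is `1` if `y = x ∘ α`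
and `0` otherwise. -/
def qubitPermMatrix {I : Type*} [DecidableEq I] [Fintype I] (α : Equiv.Perm I) :
    Matrix (I → Fin 2) (I → Fin 2) ℂ :=
  Matrix.of fun x y => if y = x ∘ α then 1 else 0

section helpers

lemma qpm_mul_apply {N : ℕ} (α : Equiv.Perm (Fin N))
    (a : Matrix (Fin N → Fin 2) (Fin N → Fin 2) ℂ) (x y : Fin N → Fin 2) :
    (qubitPermMatrix α * a) x y = a (x ∘ α) y := by
  simp [Matrix.mul_apply, qubitPermMatrix]

lemma qpm_apply_mul {N : ℕ} (α : Equiv.Perm (Fin N))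
    (a : Matrix (Fin N → Fin 2) (Fin N → Fin 2) ℂ) (x y : Fin N → Fin 2) :
    (a * qubitPermMatrix α) x (y ∘ α) = a x y := by
  have h : ∀ z : Fin N → Fin 2, (y ∘ α = z ∘ α) ↔ y = z := fun z =>
    α.surjective.injective_comp_right.eq_iff
  simp [Matrix.mul_apply, qubitPermMatrix, h]

lemma qpm_isUnit {N : ℕ} (α : Equiv.Perm (Fin N)) : IsUnit (qubitPermMatrix α).det := by
  have h : qubitPermMatrix α * qubitPermMatrix α⁻¹ = 1 := by
    ext x y
    rw [qpm_mul_apply]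
    have : y = (x ∘ α) ∘ (α⁻¹ : Equiv.Perm (Fin N)) ↔ x = y := by
      have : (x ∘ α) ∘ (α⁻¹ : Equiv.Perm (Fin N)) = x := by ext i; simp
      rw [this]; exact eq_comm
    simp only [qubitPermMatrix, Matrix.of_apply, this, Matrix.one_apply]
  exact (Matrix.isUnit_iff_isUnit_det _).1 (IsUnit.of_mul_eq_one _ h)

lemma qpm_inv_iff {N : ℕ} (α : Equiv.Perm (Fin N))
    (a : Matrix (Fin N → Fin 2) (Fin N → Fin 2) ℂ) :
    qubitPermMatrix α * a * (qubitPermMatrix α)⁻¹ = a ↔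
      ∀ x y, a (x ∘ α) (y ∘ α) = a x y := by
  have hu := qpm_isUnit α
  have h1 : qubitPermMatrix α * a * (qubitPermMatrix α)⁻¹ = a ↔
      qubitPermMatrix α * a = a * qubitPermMatrix α := by
    constructor
    · intro h
      conv_rhs => rw [← h]
      rw [Matrix.nonsing_inv_mul_cancel_right _ _ hu]
    · intro h
      rw [h, Matrix.mul_nonsing_inv_cancel_right _ _ hu]
  rw [h1]
  constructor
  · intro h x y
    rw [← qpm_mul_apply α a, h, qpm_apply_mul]
  · intro h
    ext x y
    obtain ⟨z, rfl⟩ : ∃ z : Fin N → Fin 2, y = z ∘ α := ⟨y ∘ α.symm, by ext i; simp⟩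
    rw [qpm_mul_apply, qpm_apply_mul, h]

lemma map_univ_perm {n : ℕ} {β : Type} [DecidableEq β] (f g : Fin n → β) :
    Multiset.map f Finset.univ.val = Multiset.map g Finset.univ.val ↔
      ∃ α : Equiv.Perm (Fin n), f = g ∘ α := by
  constructor
  · intro h
    have hc : ∀ b, Fintype.card {i // f i = b} = Fintype.card {i // g i = b} := by
      intro b
      have := congrArg (Multiset.count b) h
      rw [Multiset.count_map, Multiset.count_map] at this
      rw [Fintype.card_subtype, Fintype.card_subtype]
      simp only [eq_comm (a := b)] at this
      exact this
    refine ⟨Equiv.ofFiberEquiv (f := f) (g := g) fun b => Fintype.equivOfCardEq (hc b), ?_⟩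
    ext i
    exact (Equiv.ofFiberEquiv_map _ i).symm
  · rintro ⟨α, rfl⟩
    rw [← Multiset.map_map, Multiset.map_univ_val_equiv]

/-- joint type of a pair of strings -/
def tauTy {N : ℕ} (x y : Fin N → Fin 2) : Sym (Fin 2 × Fin 2) N :=
  ⟨Multiset.map (fun i => (x i, y i)) Finset.univ.val, by simp⟩

lemma tauTy_eq_iff {N : ℕ} (x y x' y' : Fin N → Fin 2) :
    tauTy x y = tauTy x' y' ↔ ∃ α : Equiv.Perm (Fin N), x = x' ∘ α ∧ y = y' ∘ α := by
  refine Subtype.ext_iff.trans ?_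
  simp only [tauTy]
  rw [map_univ_perm]
  simp [funext_iff, forall_and]

lemma tauTy_surj {N : ℕ} (t : Sym (Fin 2 × Fin 2) N) : ∃ x y, tauTy x y = t := by
  obtain ⟨m, hm⟩ := t
  induction m using Quotient.inductionOn with
  | _ l =>
    have hl : l.length = N := by simpa using hm
    subst hl
    refine ⟨fun i => (l.get i).1, fun i => (l.get i).2, Subtype.ext ?_⟩
    simp [tauTy]

/-- the parametrization -/
noncomputable def LL (N : ℕ) :
    (Sym (Fin 2 × Fin 2) N → ℝ) →ₗ[ℝ] Matrix (Fin N → Fin 2) (Fin N → Fin 2) ℂ where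
  toFun g := Matrix.of fun x y =>
    (⟨(g (tauTy x y) - g (tauTy y x)) / 2, (g (tauTy x y) + g (tauTy y x)) / 2⟩ : ℂ)
  map_add' f g := by
    ext x y
    apply Complex.ext <;> simp <;> ring
  map_smul' c g := by
    ext x y
    apply Complex.ext <;> simp <;> ring

lemma LL_inj (N : ℕ) : Function.Injective (LL N) := by
  intro f g h
  ext t
  obtain ⟨x, y, rfl⟩ := tauTy_surj t
  have h1 := congrFun (congrFun h x) y
  have h2 := congrArg Complex.re h1
  have h3 := congrArg Complex.im h1
  simp [LL] at h2 h3
  linarith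

/-- the trace functional -/
noncomputable def phi (N : ℕ) : (Sym (Fin 2 × Fin 2) N → ℝ) →ₗ[ℝ] ℝ :=
  ∑ x : Fin N → Fin 2, LinearMap.proj (tauTy x x)

lemma phi_apply (N : ℕ) (g) : phi N g = ∑ x : Fin N → Fin 2, g (tauTy x x) := by
  simp [phi]

lemma LL_trace (N : ℕ) (g) : (LL N g).trace = (phi N g : ℂ) * Complex.I := by
  rw [phi_apply, Matrix.trace]
  push_cast
  rw [Finset.sum_mul]
  refine Finset.sum_congr rfl fun x _ => ?_
  apply Complex.ext <;> simp [LL]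

lemma phi_surj (N : ℕ) : Function.Surjective (phi N) := by
  apply LinearMap.surjective
  intro h
  have := congrArg (fun f => f (fun _ => 1)) h
  simp [phi_apply] at this

lemma finrank_ker_phi (N : ℕ) :
    Module.finrank ℝ (LinearMap.ker (phi N)) = Nat.choose (N + 3) 3 - 1 := by
  have h := LinearMap.finrank_range_add_finrank_ker (phi N)
  rw [LinearMap.range_eq_top.2 (phi_surj N), finrank_top, Module.finrank_self,
    Module.finrank_fintype_fun_eq_card, Sym.card_sym_eq_choose] at h
  have h2 : Nat.choose (N + 3) N = Nat.choose (N + 3) 3 := by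
    rw [Nat.choose_symm_add]
  have h3 : Fintype.card (Fin 2 × Fin 2) + N - 1 = N + 3 := by simp; omega
  rw [h3, h2] at h
  omega

end helpers

/-- For `N ≥ 1`, the real dimension of `S_N su(2^N)` (skew-Hermitian,
traceless matrices invariant under conjugation by `U_α` for every permutation `α` of
`Fin N`) equals `C(N+3, 3) − 1`. -/
theorem finrank_SNsu (N : ℕ) (hN : 1 ≤ N)
    (V : Submodule ℝ (Matrix (Fin N → Fin 2) (Fin N → Fin 2) ℂ))
    (hV : ∀ a, a ∈ V ↔ aᴴ = -a ∧ a.trace = 0 ∧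
      ∀ α : Equiv.Perm (Fin N), qubitPermMatrix α * a * (qubitPermMatrix α)⁻¹ = a) :
    Module.finrank ℝ V = Nat.choose (N + 3) 3 - 1 := by
  have key : V = (LinearMap.ker (phi N)).map (LL N) := by
    ext a
    rw [hV, Submodule.mem_map]
    simp only [qpm_inv_iff]
    constructor
    · rintro ⟨h1, h2, h3⟩
      choose X Y hXY using tauTy_surj (N := N)
      have hf : ∀ x y, a (X (tauTy x y)) (Y (tauTy x y)) = a x y := by
        intro x y
        obtain ⟨α, hx, hy⟩ := (tauTy_eq_iff _ _ _ _).1 (hXY (tauTy x y))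
        rw [hx, hy, h3]
      have hL : LL N (fun t => (a (X t) (Y t)).re + (a (X t) (Y t)).im) = a := by
        ext x y
        have h := congrFun (congrFun h1 x) y
        have hr := congrArg Complex.re h
        have hi := congrArg Complex.im h
        simp at hr hi
        apply Complex.ext <;> simp [LL, hf, hr] <;> linarith
      refine ⟨_, ?_, hL⟩
      have ht := LL_trace N (fun t => (a (X t) (Y t)).re + (a (X t) (Y t)).im)
      rw [hL, h2] at ht
      simpa using ht.symm
    · rintro ⟨g, hg, rfl⟩
      refine ⟨?_, ?_, ?_⟩
      · ext x y
        apply Complex.ext <;> simp [LL] <;> ring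
      · rw [LL_trace, LinearMap.mem_ker.1 hg]; simp
      · intro α x y
        have h : ∀ u v : Fin N → Fin 2, tauTy (u ∘ α) (v ∘ α) = tauTy u v := fun u v =>
          (tauTy_eq_iff _ _ _ _).2 ⟨α, rfl, rfl⟩
        simp [LL, h]
  rw [key, ← (Submodule.equivMapOfInjective (LL N) (LL_inj N) _).finrank_eq, finrank_ker_phi]
end

section
/- Let N ≥ 3 and let D_N be the dihedral subgroup of the permutation group of Fin N generated by the N-cycle i ↦ i+1 (mod N) and the reflection i ↦ −i (mod N). Then the real dimension of D_N su(2^N), the real vector space of 2^N × 2^N complex matrices a that are skew-Hermitian, traceless, and satisfy U_α a U_α⁻¹ = a for all α ∈ D_N, equals (1/(2N)) · Σ_{d ∣ N} φ(d) · 4^{N/d} + 5·4^{(N−2)/2} − 1 if N is even, and (1/(2N)) · Σ_{d ∣ N} φ(d) · 4^{N/d} + 2·4^{(N−1)/2} − 1 if N is odd, where φ is Euler's totient function and the sums run over the positive divisors d of N. -/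
open Matrix

theorem absfin {I O : Type*} [Fintype I] [DecidableEq I] [Nonempty I] [Fintype O] (q : I → I → O)
    (hq : ∀ o, ∃ x y, q x y = o)
    (hs : ∀ x y x' y', q x y = q x' y' → q y x = q y' x')
    (V : Submodule ℝ (Matrix I I ℂ))
    (hV : ∀ a, a ∈ V ↔ aᴴ = -a ∧ a.trace = 0 ∧ ∀ x y x' y', q x y = q x' y' → a x y = a x' y') :
    Module.finrank ℝ V + 1 = Fintype.card O := by
  classical
  let L : (O → ℝ) →ₗ[ℝ] Matrix I I ℂ :=
    { toFun := fun f => Matrix.of fun x y => ⟨(f (q x y) - f (q y x)) / 2, (f (q x y) + f (q y x)) / 2⟩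
      map_add' := by
        intro f g; ext x y; apply Complex.ext <;> simp <;> ring
      map_smul' := by
        intro c f; ext x y; apply Complex.ext <;> simp <;> ring }
  have hL : ∀ f x y, L f x y = ⟨(f (q x y) - f (q y x)) / 2, (f (q x y) + f (q y x)) / 2⟩ :=
    fun f x y => rfl
  let φ : (O → ℝ) →ₗ[ℝ] ℝ := ∑ x : I, LinearMap.proj (q x x)
  have hφ : ∀ f, φ f = ∑ x, f (q x x) := by intro f; simp [φ]
  have hφ0 : φ ≠ 0 := by
    intro h
    have := hφ (fun _ => 1)
    rw [h] at this
    simp at this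
    exact Fintype.card_ne_zero (α := I) (by exact_mod_cast this.symm)
  have htr : ∀ f, (L f).trace = ⟨0, φ f⟩ := by
    intro f
    rw [hφ, Matrix.trace]
    apply Complex.ext
    · simp [hL]
    · simp [hL]
  have hinj : Function.Injective L := by
    intro f g h
    funext o
    obtain ⟨x, y, rfl⟩ := hq o
    have h1 := congrFun (congrFun h x) y
    rw [hL, hL] at h1
    have h2 := congrArg Complex.re h1
    have h3 := congrArg Complex.im h1
    simp only at h2 h3
    linarith
  have hVm : V = (LinearMap.ker φ).map L := by
    ext a
    rw [hV]
    constructor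
    · rintro ⟨h1, h2, h3⟩
      choose u v huv using hq
      have key : L (fun o => (a (u o) (v o)).re + (a (u o) (v o)).im) = a := by
        ext x y
        rw [hL]
        have e : ∀ x y, a (u (q x y)) (v (q x y)) = a x y := fun x y => h3 _ _ _ _ (huv _)
        simp only [e]
        have h4 := congrFun (congrFun h1 x) y
        simp only [conjTranspose_apply, Matrix.neg_apply] at h4
        have h5 := congrArg Complex.re h4
        have h6 := congrArg Complex.im h4
        simp at h5 h6
        apply Complex.ext <;> simp only <;> linarith
      refine ⟨_, ?_, key⟩
      have := htr (fun o => (a (u o) (v o)).re + (a (u o) (v o)).im)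
      rw [key, h2] at this
      exact (congrArg Complex.im this).symm
    · rintro ⟨f, hf, rfl⟩
      refine ⟨?_, ?_, ?_⟩
      · ext x y
        simp only [conjTranspose_apply, Matrix.neg_apply, hL]
        apply Complex.ext <;> simp <;> ring
      · rw [htr, LinearMap.mem_ker.1 hf]; rfl
      · intro x y x' y' h
        rw [hL, hL, h, hs _ _ _ _ h]
  rw [hVm, ← (Submodule.equivMapOfInjective L hinj (LinearMap.ker φ)).finrank_eq,
    Module.Dual.finrank_ker_add_one_of_ne_zero (f := φ) hφ0, Module.finrank_fintype_fun_eq_card]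

theorem card_inv_setoid {X C : Type*} [Finite X] (s : Setoid X) (P : (X → C) → Prop)
    (hP : ∀ f, P f ↔ ∀ x y, s x y → f x = f y) :
    Nat.card {f : X → C // P f} = Nat.card C ^ Nat.card (Quotient s) := by
  rw [← Nat.card_fun]
  exact Nat.card_congr
    { toFun := fun f => Quotient.lift f.1 ((hP _).1 f.2)
      invFun := fun g => ⟨fun x => g (Quotient.mk s x), (hP _).2 fun x y h => by
        rw [Quotient.sound (s := s) h]⟩
      left_inv := fun f => rfl
      right_inv := fun g => by
        funext o
        induction o using Quotient.inductionOn
        rfl }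

theorem card_rot {N : ℕ} [NeZero N] {C : Type*} (k : ZMod N) :
    Nat.card {f : ZMod N → C // ∀ x, f (x + k) = f x} = Nat.card C ^ (N / addOrderOf k) := by
  rw [card_inv_setoid (QuotientAddGroup.leftRel (AddSubgroup.zmultiples k))]
  · congr 1
    have h := AddSubgroup.card_eq_card_quotient_mul_card_addSubgroup (AddSubgroup.zmultiples k)
    rw [Nat.card_zmultiples, Nat.card_zmod] at h
    have : 0 < addOrderOf k := addOrderOf_pos k
    exact (Nat.div_eq_of_eq_mul_left this h).symm
  · intro f
    constructor
    · intro h x y hxy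
      rw [QuotientAddGroup.leftRel_apply, AddSubgroup.mem_zmultiples_iff] at hxy
      obtain ⟨m, hm⟩ := hxy
      have key : ∀ m : ℕ, ∀ x, f (x + m • k) = f x := by
        intro m
        induction m with
        | zero => simp
        | succ m ih => intro x; rw [succ_nsmul, ← add_assoc, h, ih]
      have hy : y = x + m • k := by rw [hm]; abel
      rw [hy]
      rcases m with m | m
      · simpa using (key m x).symm
      · have := key (m+1) (x + (Int.negSucc m) • k)
        rw [negSucc_zsmul, neg_add_cancel_right] at this
        rw [negSucc_zsmul]; exact this
    · intro h x
      refine (h _ _ ?_).symm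
      rw [QuotientAddGroup.leftRel_apply]
      simp

theorem sum_rot {N : ℕ} [NeZero N] (g : ℕ → ℕ) :
    ∑ k : ZMod N, g (addOrderOf k) = ∑ d ∈ N.divisors, Nat.totient d * g d := by
  classical
  rw [← Finset.sum_fiberwise_of_maps_to (s := Finset.univ) (t := N.divisors)
    (g := fun k : ZMod N => addOrderOf k)]
  · refine Finset.sum_congr rfl fun d hd => ?_
    rw [Finset.sum_congr rfl (g := fun _ => g d), Finset.sum_const, smul_eq_mul]
    · congr 1
      exact IsAddCyclic.card_addOrderOf_eq_totient (by
        rw [ZMod.card]; exact Nat.dvd_of_mem_divisors hd)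
    · intro x hx; rw [(Finset.mem_filter.1 hx).2]
  · intro k _
    rw [Nat.mem_divisors]
    refine ⟨?_, NeZero.ne N⟩
    have := addOrderOf_dvd_natCard k
    rwa [Nat.card_zmod] at this

theorem card_invol {X C : Type*} [Finite X] (σ : X → X) (hσ : ∀ x, σ (σ x) = x) (n : ℕ)
    (hn : Nat.card X + Nat.card {x // σ x = x} = 2 * n) :
    Nat.card {f : X → C // ∀ x, f (σ x) = f x} = Nat.card C ^ n := by
  classical
  have : Fintype X := Fintype.ofFinite X
  let act : MulAction ℤˣ X :=
    { smul := fun u x => if u = 1 then x else σ x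
      one_smul := fun x => if_pos rfl
      mul_smul := by
        intro u v x
        change (if u * v = 1 then x else σ x) = 
          if u = 1 then (if v = 1 then x else σ x) else σ (if v = 1 then x else σ x)
        rcases Int.units_eq_one_or u with rfl | rfl <;>
        rcases Int.units_eq_one_or v with rfl | rfl <;> simp [hσ] }
  have h1 : ∀ x : X, (-1 : ℤˣ) • x = σ x := fun x => if_neg (by decide)
  rw [card_inv_setoid (MulAction.orbitRel ℤˣ X)]
  · congr 1
    have B := MulAction.sum_card_fixedBy_eq_card_orbits_mul_card_group ℤˣ X
    have hu : (Finset.univ : Finset ℤˣ) = {1, -1} := rfl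
    rw [hu, Finset.sum_pair (by decide)] at B
    simp only [← Nat.card_eq_fintype_card] at B
    have e1 : Nat.card (MulAction.fixedBy X (1 : ℤˣ)) = Nat.card X := by
      rw [MulAction.fixedBy_one_eq_univ]; exact Nat.card_univ
    have e2 : Nat.card (MulAction.fixedBy X (-1 : ℤˣ)) = Nat.card {x // σ x = x} := by
      refine Nat.card_congr (Equiv.subtypeEquivRight fun x => ?_)
      rw [MulAction.mem_fixedBy, h1]
    have e3 : Nat.card ℤˣ = 2 := by simp
    rw [e1, e2, e3, hn] at B
    have : 2 * Nat.card (Quotient (MulAction.orbitRel ℤˣ X)) = 2 * n := by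
      rw [B, mul_comm]
    omega
  · intro f
    constructor
    · rintro h x y hxy
      obtain ⟨u, rfl⟩ := MulAction.orbitRel_apply.1 hxy
      rcases Int.units_eq_one_or u with rfl | rfl
      · simp
      · change f ((-1 : ℤˣ) • y) = f y
        rw [h1, h]
    · intro h x
      exact h _ _ (MulAction.orbitRel_apply.2 ⟨-1, h1 x⟩)

/-- number of solutions of the reflection equation -/
theorem card_odd {N : ℕ} [NeZero N] (hN : ¬ Even N) (k : ZMod N) :
    Nat.card {x : ZMod N // -x - k = x} = 1 := by
  have h2 : IsUnit (2 : ZMod N) := by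
    have := (ZMod.isUnit_iff_coprime 2 N).2 (by
      rw [Nat.coprime_two_left]; exact Nat.not_even_iff_odd.1 hN)
    simpa using this
  obtain ⟨u, hu⟩ := h2
  rw [Nat.card_eq_one_iff_exists]
  have e : (2 : ZMod N) * ((u⁻¹ : (ZMod N)ˣ) : ZMod N) = 1 := by rw [← hu]; simp
  refine ⟨⟨-k * (u⁻¹ : (ZMod N)ˣ), by linear_combination k * e⟩, ?_⟩
  rintro ⟨x, hx⟩
  ext
  change x = _
  linear_combination (-((u⁻¹ : (ZMod N)ˣ) : ZMod N)) * hx - x * e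

theorem two_mul_eq_zero' {m : ℕ} [NeZero (2 * m)] (x : ZMod (2 * m)) :
    2 * x = 0 ↔ x = 0 ∨ x = (m : ZMod (2*m)) := by
  have hm : 0 < m := by have := NeZero.ne (2*m); omega
  constructor
  · intro h
    have hx := ZMod.val_lt x
    have h1 : ((2 * x.val : ℕ) : ZMod (2*m)) = 0 := by
      push_cast; rw [ZMod.natCast_zmod_val]; exact h
    rw [ZMod.natCast_eq_zero_iff] at h1
    obtain ⟨c, hc⟩ := h1
    have hc' : x.val = m * c := by nlinarith
    have : c < 2 := by nlinarith
    rw [← ZMod.natCast_zmod_val x, hc']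
    interval_cases c <;> simp
  · rintro (rfl | rfl)
    · simp
    · have := ZMod.natCast_self (2 * m)
      push_cast at this; exact this

theorem sum_even {m : ℕ} [NeZero (2 * m)] (g : ℕ → ℕ) :
    ∑ k : ZMod (2 * m), g (Nat.card {x : ZMod (2 * m) // -x - k = x}) = m * (g 0 + g 2) := by
  classical
  have hm : 0 < m := by have := NeZero.ne (2*m); omega
  have hm0 : (m : ZMod (2*m)) ≠ 0 := by
    rw [Ne, ZMod.natCast_eq_zero_iff]
    intro h; have := Nat.le_of_dvd hm h; omega
  have hc : ∀ k : ZMod (2*m), Nat.card {x : ZMod (2 * m) // -x - k = x} =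
      if k ∈ Finset.univ.image (fun x : ZMod (2*m) => 2 * x) then 2 else 0 := by
    intro k
    split_ifs with h
    · obtain ⟨j, -, rfl⟩ := Finset.mem_image.1 h
      have : ∀ x : ZMod (2*m), -x - 2 * j = x ↔ x ∈ ({-j, -j + m} : Finset (ZMod (2*m))) := by
        intro x
        have := two_mul_eq_zero' (x + j)
        rw [Finset.mem_insert, Finset.mem_singleton]
        constructor
        · intro h
          rcases this.1 (by linear_combination -h) with h | h
          · left; linear_combination h
          · right; linear_combination h
        · intro h
          have := this.2 (by
            rcases h with h | h
            · left; linear_combination h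
            · right; linear_combination h)
          linear_combination -this
      rw [Nat.card_congr (Equiv.subtypeEquivRight this), Nat.card_eq_fintype_card, Fintype.card_coe,
        Finset.card_pair]
      simp [hm0]
    · rw [Nat.card_eq_zero]
      left
      constructor
      rintro ⟨x, hx⟩
      apply h
      exact Finset.mem_image.2 ⟨-x, Finset.mem_univ _, by linear_combination hx⟩
  have hcard : (Finset.univ.image (fun x : ZMod (2*m) => 2 * x)).card = m := by
    have h := Finset.card_eq_sum_card_image (fun x : ZMod (2*m) => 2 * x) Finset.univ
    rw [Finset.sum_congr rfl (g := fun _ => 2), Finset.sum_const, Finset.card_univ, ZMod.card] at h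
    · simp only [smul_eq_mul] at h; omega
    · intro b hb
      have := hc (-b)
      obtain ⟨j, -, rfl⟩ := Finset.mem_image.1 hb
      rw [if_pos (Finset.mem_image.2 ⟨-j, Finset.mem_univ _, by ring⟩)] at this
      rw [Nat.card_eq_fintype_card, Fintype.card_subtype] at this
      refine Eq.trans ?_ this
      congr 1
      ext x
      simp only [Finset.mem_filter, Finset.mem_univ, true_and]
      constructor <;> intro h <;> linear_combination -h
  simp only [hc]
  have : ∀ k : ZMod (2*m), g (if k ∈ Finset.univ.image (fun x : ZMod (2*m) => 2 * x) then 2 else 0)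
     = if k ∈ Finset.univ.image (fun x : ZMod (2*m) => 2 * x) then g 2 else g 0 := by
    intro k; split_ifs <;> rfl
  simp only [this]
  rw [Finset.sum_ite, Finset.sum_const, Finset.sum_const, Finset.filter_not]
  have e : Finset.univ.filter (fun k => k ∈ Finset.univ.image (fun x : ZMod (2*m) => 2 * x)) = 
    Finset.univ.image (fun x : ZMod (2*m) => 2 * x) := by ext; simp
  rw [e, Finset.card_sdiff_of_subset (Finset.subset_univ _), hcard, Finset.card_univ, ZMod.card]
  simp only [smul_eq_mul]
  have : 2 * m - m = m := by omega
  rw [this]; ring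

theorem sum_even' (N : ℕ) [NeZero N] (m : ℕ) (h : N = 2 * m) (g : ℕ → ℕ) :
    ∑ k : ZMod N, g (Nat.card {x : ZMod N // -x - k = x}) = m * (g 0 + g 2) := by
  subst h
  exact sum_even g

/-- The dihedral group acting on colourings. -/
@[reducible]
def dihedAct (N : ℕ) (C : Type*) : MulAction (DihedralGroup N) (ZMod N → C) where
  smul g f := match g with
    | .r k => fun x => f (x - k)
    | .sr k => fun x => f (-x - k)
  one_smul f := by
    funext x
    change f (x - 0) = f x
    rw [sub_zero]
  mul_smul := by
    rintro (i | i) (j | j) f <;> funext x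
    · change f (x - (i + j)) = f (x - i - j)
      congr 1; ring
    · change f (-x - (j - i)) = f (-(x - i) - j)
      congr 1; ring
    · change f (-x - (i + j)) = f (-x - i - j)
      congr 1; ring
    · change f (x - (j - i)) = f (-(-x - i) - j)
      congr 1; ring

theorem card_orbits (N : ℕ) [NeZero N] (C : Type*) [Finite C] (c : ZMod N → ℕ)
    (hc : ∀ k, N + Nat.card {x : ZMod N // -x - k = x} = 2 * c k) :
    Nat.card (Quotient (@MulAction.orbitRel (DihedralGroup N) (ZMod N → C) _ (dihedAct N C)))
      * (2 * N) = (∑ d ∈ N.divisors, Nat.totient d * Nat.card C ^ (N / d))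
        + ∑ k, Nat.card C ^ (c k) := by
  classical
  have := Fintype.ofFinite C
  let _ := dihedAct N C
  have B := MulAction.sum_card_fixedBy_eq_card_orbits_mul_card_group (DihedralGroup N) (ZMod N → C)
  simp only [← Nat.card_eq_fintype_card] at B
  rw [DihedralGroup.nat_card] at B
  rw [← B, ← Equiv.sum_comp DihedralGroup.equivSum.symm, Fintype.sum_sum_type,
    ← sum_rot (fun d => Nat.card C ^ (N / d))]
  congr 1
  · refine Finset.sum_congr rfl fun k _ => ?_
    rw [← card_rot]
    refine Nat.card_congr (Equiv.subtypeEquivRight fun f => ?_)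
    rw [MulAction.mem_fixedBy]
    change (fun x => f (x - k)) = f ↔ _
    constructor
    · intro h x
      have := congrFun h (x + k)
      simp only [add_sub_cancel_right] at this
      exact this.symm
    · intro h
      funext x
      rw [← h (x - k), sub_add_cancel]
  · refine Finset.sum_congr rfl fun k _ => ?_
    rw [← card_invol (fun x : ZMod N => -x - k) (by intro x; ring) (c k) (by
      rw [Nat.card_zmod]; exact hc k)]
    refine Nat.card_congr (Equiv.subtypeEquivRight fun f => ?_)
    rw [MulAction.mem_fixedBy]
    change (fun x => f (-x - k)) = f ↔ _
    exact funext_iff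

theorem qpm_conj {I : Type*} [DecidableEq I] [Fintype I] (α : Equiv.Perm I)
    (a : Matrix (I → Fin 2) (I → Fin 2) ℂ) :
    qubitPermMatrix α * a * (qubitPermMatrix α)⁻¹ = a ↔ ∀ x y, a (x ∘ α) (y ∘ α) = a x y := by
  have hl : ∀ (β : Equiv.Perm I) (b : Matrix (I → Fin 2) (I → Fin 2) ℂ) x y,
      (qubitPermMatrix β * b) x y = b (x ∘ β) y := by
    intro β b x y
    rw [Matrix.mul_apply]
    simp [qubitPermMatrix]
  have hinv : (qubitPermMatrix α)⁻¹ = qubitPermMatrix α⁻¹ := by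
    apply Matrix.inv_eq_right_inv
    ext x y
    rw [hl, Matrix.one_apply]
    simp only [qubitPermMatrix, Matrix.of_apply]
    congr 1
    have : (x ∘ α) ∘ (α⁻¹ : Equiv.Perm I) = x := by funext i; simp
    rw [this]
    exact propext eq_comm
  have hr : ∀ x y, (qubitPermMatrix α * a * (qubitPermMatrix α)⁻¹) x y = a (x ∘ α) (y ∘ α) := by
    intro x y
    rw [hinv, Matrix.mul_assoc, hl, Matrix.mul_apply]
    rw [Finset.sum_eq_single (y ∘ α)]
    · have : (y ∘ α) ∘ (α⁻¹ : Equiv.Perm I) = y := by funext i; simp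
      simp only [qubitPermMatrix, Matrix.of_apply, this, if_true, mul_one]
    · intro z _ hz
      simp only [qubitPermMatrix, Matrix.of_apply]
      rw [if_neg, mul_zero]
      rintro rfl
      apply hz
      funext i; simp
    · simp
  constructor
  · intro h x y
    rw [← hr, h]
  · intro h
    ext x y
    rw [hr, h]

theorem act_closure' (N : ℕ) [NeZero N] (C : Type*) (ρ τ : Equiv.Perm (ZMod N))
    (hρ : ∀ x, ρ x = x + 1) (hτ : ∀ x, τ x = -x) (f f' : ZMod N → C) :
    (@MulAction.orbitRel (DihedralGroup N) (ZMod N → C) _ (dihedAct N C)) f f' ↔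
    ∃ α ∈ Subgroup.closure {ρ, τ}, f = f' ∘ α := by
  let _ := dihedAct (N) C
  change (∃ g : DihedralGroup (N), g • f' = f) ↔ _
  constructor
  · rintro ⟨g, rfl⟩
    set H := Subgroup.closure {ρ, τ} with hH
    have hrot : ρ ∈ H := Subgroup.subset_closure (by simp)
    have hneg : τ ∈ H := Subgroup.subset_closure (by simp)
    let P : DihedralGroup (N) → Prop := fun g =>
      ∃ α ∈ H, ∀ f : ZMod N → C, g • f = f ∘ α
    have hmul : ∀ g h, P g → P h → P (g * h) := by
      rintro g h ⟨α, hα, ha⟩ ⟨β, hβ, hb⟩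
      refine ⟨β * α, H.mul_mem hβ hα, fun f => ?_⟩
      rw [mul_smul, hb, ha]
      rfl
    have h1 : P 1 := ⟨1, H.one_mem, fun f => by rw [one_smul]; rfl⟩
    have hr1 : P (.r 1) := by
      refine ⟨ρ⁻¹, H.inv_mem hrot, fun f => ?_⟩
      funext x
      change f ((x : ZMod N) - 1) = f (ρ⁻¹ x)
      congr 1
      rw [eq_comm, Equiv.Perm.inv_eq_iff_eq, hρ, sub_add_cancel]
    have hs : P (.sr 0) := by
      refine ⟨_, hneg, fun f => ?_⟩
      funext x
      change f (-x - 0) = f (τ x)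
      rw [sub_zero, hτ]
    have hrk : ∀ m : ℕ, P ((.r 1) ^ m) := by
      intro m
      induction m with
      | zero => simpa using h1
      | succ m ih => rw [pow_succ]; exact hmul _ _ ih hr1
    have hrk' : ∀ k, P (.r k) := by
      intro k
      have := hrk k.val
      rwa [DihedralGroup.r_one_pow, ZMod.natCast_zmod_val] at this
    have hall : P g := by
      rcases g with k | k
      · exact hrk' k
      · have := hmul _ _ hs (hrk' k)
        rwa [DihedralGroup.sr_mul_r, zero_add] at this
    obtain ⟨α, hα, h⟩ := hall
    exact ⟨α, hα, h _⟩
  · rintro ⟨α, hα, rfl⟩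
    suffices h : ∃ g : DihedralGroup (N), ∀ f : ZMod N → C,
        g • f = f ∘ α by
      obtain ⟨g, hg⟩ := h
      exact ⟨g, hg f'⟩
    induction hα using Subgroup.closure_induction with
    | mem α hα =>
      rcases hα with hα | hα
      · rw [hα]
        refine ⟨.r (-1), fun f => ?_⟩
        funext x
        change f ((x : ZMod N) - (-1)) = f (ρ x)
        rw [hρ, sub_neg_eq_add]
      · rw [Set.mem_singleton_iff] at hα
        rw [hα]
        refine ⟨.sr 0, fun f => ?_⟩
        funext x
        change f (-x - 0) = f (τ x)
        rw [sub_zero, hτ]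
    | one => exact ⟨1, fun f => by rw [one_smul]; rfl⟩
    | mul α β _ _ ha hb =>
      obtain ⟨g, hg⟩ := ha
      obtain ⟨h, hh⟩ := hb
      refine ⟨h * g, fun f => ?_⟩
      rw [mul_smul, hg, hh]
      rfl
    | inv α _ ha =>
      obtain ⟨g, hg⟩ := ha
      refine ⟨g⁻¹, fun f => ?_⟩
      rw [inv_smul_eq_iff, hg]
      funext i
      simp

theorem act_closure (n : ℕ) (C : Type*) (f f' : Fin (n+1) → C) :
    (@MulAction.orbitRel (DihedralGroup (n+1)) (ZMod (n+1) → C) _ (dihedAct (n+1) C)) f f' ↔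
    ∃ α ∈ Subgroup.closure {finRotate (n+1), Equiv.neg (Fin (n+1))}, f = f' ∘ α := by
  exact act_closure' (n+1) C (finRotate (n+1)) (Equiv.neg (Fin (n+1)))
    (fun x => finRotate_apply (n := n+1) x) (fun x => rfl) f f'

theorem finrank_aux (n : ℕ)
    (V : Submodule ℝ (Matrix (Fin (n+1) → Fin 2) (Fin (n+1) → Fin 2) ℂ))
    (hV : ∀ a, a ∈ V ↔ aᴴ = -a ∧ a.trace = 0 ∧
      ∀ α ∈ Subgroup.closure {finRotate (n+1), Equiv.neg (Fin (n+1))},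
        qubitPermMatrix α * a * (qubitPermMatrix α)⁻¹ = a) :
    Module.finrank ℝ V + 1 = Nat.card (Quotient (@MulAction.orbitRel (DihedralGroup (n+1))
      (ZMod (n+1) → Fin 2 × Fin 2) _ (dihedAct (n+1) (Fin 2 × Fin 2)))) := by
  classical
  set s := @MulAction.orbitRel (DihedralGroup (n+1))
      (ZMod (n+1) → Fin 2 × Fin 2) _ (dihedAct (n+1) (Fin 2 × Fin 2)) with hs
  have : Finite (Quotient s) := Quotient.finite s
  have := Fintype.ofFinite (Quotient s)
  let q : (Fin (n+1) → Fin 2) → (Fin (n+1) → Fin 2) → Quotient s :=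
    fun x y => Quotient.mk s (fun i : Fin (n+1) => (x i, y i))
  have hq : ∀ x y x' y', q x y = q x' y' ↔
      ∃ α ∈ Subgroup.closure {finRotate (n+1), Equiv.neg (Fin (n+1))}, x = x' ∘ α ∧ y = y' ∘ α := by
    intro x y x' y'
    refine Iff.trans Quotient.eq ?_
    refine Iff.trans (act_closure n _ _ _) ?_
    refine exists_congr fun α => and_congr_right fun _ => ?_
    constructor
    · intro h
      exact ⟨funext fun i => congrArg Prod.fst (congrFun h i),
        funext fun i => congrArg Prod.snd (congrFun h i)⟩
    · rintro ⟨rfl, rfl⟩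
      rfl
  rw [Nat.card_eq_fintype_card]
  refine absfin q ?_ ?_ V ?_
  · intro o
    induction o using Quotient.inductionOn with
    | h f => exact ⟨fun i => (f i).1, fun i => (f i).2, rfl⟩
  · intro x y x' y'
    rw [hq, hq]
    rintro ⟨α, h, h1, h2⟩
    exact ⟨α, h, h2, h1⟩
  · intro a
    rw [hV]
    refine and_congr_right fun _ => and_congr_right fun _ => ?_
    simp only [qpm_conj]
    constructor
    · intro h x y x' y' hh
      obtain ⟨α, hα, rfl, rfl⟩ := (hq _ _ _ _).1 hh
      exact h α hα _ _
    · intro h α hα x y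
      exact h _ _ _ _ ((hq _ _ _ _).2 ⟨α, hα, rfl, rfl⟩)

/-- For `N ≥ 3`, let `D_N` be the dihedral subgroup of `Equiv.Perm (Fin N)`
generated by the `N`-cycle `i ↦ i + 1 (mod N)` (i.e. `finRotate N`) and the reflection
`i ↦ −i (mod N)`.  The real dimension of `D_N su(2^N)` equals
`(1/(2N)) Σ_{d ∣ N} φ(d) 4^{N/d} + 5·4^{(N−2)/2} − 1` if `N` is even, and
`(1/(2N)) Σ_{d ∣ N} φ(d) 4^{N/d} + 2·4^{(N−1)/2} − 1` if `N` is odd. -/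
theorem finrank_DNsu (N : ℕ) [NeZero N] (hN : 3 ≤ N)
    (V : Submodule ℝ (Matrix (Fin N → Fin 2) (Fin N → Fin 2) ℂ))
    (hV : ∀ a, a ∈ V ↔ aᴴ = -a ∧ a.trace = 0 ∧
      ∀ α ∈ Subgroup.closure {finRotate N, Equiv.neg (Fin N)},
        qubitPermMatrix α * a * (qubitPermMatrix α)⁻¹ = a) :
    (Even N →
      (Module.finrank ℝ V : ℚ) =
        (1 / (2 * N)) * ∑ d ∈ N.divisors, (Nat.totient d : ℚ) * 4 ^ (N / d)
          + 5 * 4 ^ ((N - 2) / 2) - 1) ∧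
    (¬ Even N →
      (Module.finrank ℝ V : ℚ) =
        (1 / (2 * N)) * ∑ d ∈ N.divisors, (Nat.totient d : ℚ) * 4 ^ (N / d)
          + 2 * 4 ^ ((N - 1) / 2) - 1) := by
  obtain ⟨n, rfl⟩ : ∃ n, N = n + 1 := ⟨N - 1, by omega⟩
  have h1 := finrank_aux n V hV
  have h4 : Nat.card (Fin 2 × Fin 2) = 4 := by simp
  have hN0 : ((n + 1 : ℕ) : ℚ) ≠ 0 := by positivity
  constructor
  · rintro ⟨m, hm⟩
    have hm2 : n + 1 = 2 * m := by omega
    have hs : ∀ g : ℕ → ℕ, ∑ k : ZMod (n + 1), g (Nat.card {x : ZMod (n + 1) // -x - k = x})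
        = m * (g 0 + g 2) := by
      exact sum_even' (n + 1) m hm2
    have hpar : ∀ k : ZMod (n + 1), Nat.card {x : ZMod (n + 1) // -x - k = x} = 0 ∨ 
        Nat.card {x : ZMod (n + 1) // -x - k = x} = 2 := by
      by_contra hcon
      push Not at hcon
      obtain ⟨k, hk0, hk2⟩ := hcon
      have h := hs (fun t => if t = 0 ∨ t = 2 then 0 else 1)
      simp only [true_or, or_true, if_true, add_zero, mul_zero] at h
      rw [Finset.sum_eq_zero_iff] at h
      have := h k (Finset.mem_univ _)
      rw [if_neg (by tauto)] at this
      exact one_ne_zero this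
    have ho := card_orbits (n + 1) (Fin 2 × Fin 2)
      (fun k => (n + 1 + Nat.card {x : ZMod (n + 1) // -x - k = x}) / 2) (by
        intro k
        rcases hpar k with h | h <;> rw [h] <;> omega)
    rw [hs (fun t => Nat.card (Fin 2 × Fin 2) ^ ((n + 1 + t) / 2)), ← h1, h4] at ho
    obtain ⟨l, rfl⟩ : ∃ l, m = l + 1 := ⟨m - 1, by omega⟩
    have e1 : (n + 1 + 0) / 2 = l + 1 := by omega
    have e2 : (n + 1 + 2) / 2 = l + 2 := by omega
    have e3 : (n + 1 - 2) / 2 = l := by omega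
    rw [e1, e2] at ho
    rw [e3]
    have ho' := congrArg (Nat.cast : ℕ → ℚ) ho
    have hmq : ((n + 1 : ℕ) : ℚ) = 2 * (l + 1) := by rw [hm2]; push_cast; ring
    simp only [Nat.cast_mul, Nat.cast_add, Nat.cast_sum, Nat.cast_pow, Nat.cast_ofNat,
      Nat.cast_one] at ho' hmq ⊢
    rw [hmq] at ho' ⊢
    have hl : ((l : ℚ) + 1) ≠ 0 := by positivity
    field_simp
    rw [pow_succ, pow_succ] at ho'
    linear_combination ho'
  · intro hodd
    have ho := card_orbits (n + 1) (Fin 2 × Fin 2) (fun _ => (n + 2) / 2) (by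
      intro k
      rw [card_odd hodd]
      rw [Nat.not_even_iff_odd] at hodd
      obtain ⟨m, hm⟩ := hodd
      omega)
    rw [← h1, h4, Finset.sum_const, Finset.card_univ, ZMod.card, smul_eq_mul] at ho
    rw [Nat.not_even_iff_odd] at hodd
    obtain ⟨m, hm⟩ := hodd
    have e1 : (n + 2) / 2 = m + 1 := by omega
    have e2 : (n + 1 - 1) / 2 = m := by omega
    rw [e1] at ho
    rw [e2]
    have ho' := congrArg (Nat.cast : ℕ → ℚ) ho
    simp only [Nat.cast_mul, Nat.cast_add, Nat.cast_sum, Nat.cast_pow, Nat.cast_ofNat,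
      Nat.cast_one] at ho' hN0 ⊢
    field_simp
    rw [pow_succ] at ho'
    linear_combination ho'
end
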